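/- Let d ≥ 2 and let A : ℝ^d → ℝ^d be smooth. For every smooth compactly supported g : ℝ^d → ℂ vanishing on a neighbourhood of the origin, setting ψ(x) := |x|^{−(d−2)/2} g(x), one has the identity ∫_{ℝ^d} |∇ψ(x) − iA(x)ψ(x)|² dx − ((d−2)/2)² ∫_{ℝ^d} |ψ(x)|²/|x|² dx = ∫_{ℝ^d} |∇g(x) − iA(x)g(x)|² |x|^{−(d−2)} dx. -/

import Mathlib

open MeasureTheory Real Filter

/-- The derivative of a real power of the norm away from the origin. -/
theorem hasFDerivAt_norm_rpow_of_ne_zero {E : Type*} [NormedAddCommGroup E]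
    [InnerProductSpace ℝ E] {x : E} (hx : x ≠ 0) (p : ℝ) :
    HasFDerivAt (fun y : E => ‖y‖ ^ p) ((p * ‖x‖ ^ (p - 2)) • innerSL ℝ x) x := by
  have hpos : 0 < ‖x‖ := norm_pos_iff.mpr hx
  have hsq : ∀ (y : E) (q : ℝ), (‖y‖ ^ 2) ^ (q / 2) = ‖y‖ ^ q := fun y q => by
    rw [← rpow_natCast, ← rpow_mul (norm_nonneg y)]
    congr 1
    push_cast
    ring
  have h := (hasStrictFDerivAt_norm_sq x).hasFDerivAt.rpow_const (p := p / 2)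
    (Or.inl (pow_pos hpos 2).ne')
  simp only [hsq] at h
  convert h using 1
  rw [show p / 2 - 1 = (p - 2) / 2 by ring, hsq]
  ext v
  simp
  ring

/-- A function which is continuous on a compact set and vanishes outside it is integrable. -/
theorem integrable_of_continuousOn_of_eq_zero_off {X : Type*} [TopologicalSpace X]
    [MeasurableSpace X] [OpensMeasurableSpace X] [T2Space X] {μ : Measure X}
    [IsFiniteMeasureOnCompacts μ] {K : Set X} (hK : IsCompact K) {u : X → ℝ}
    (hu : ContinuousOn u K) (hoff : ∀ x ∉ K, u x = 0) : Integrable u μ := by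
  rw [← integrableOn_iff_integrable_of_support_subset (s := K)]
  · exact hu.integrableOn_compact' hK hK.measurableSet
  · intro x hx
    by_contra h
    exact hx (hoff x h)

/-- The integral of a directional derivative of a compactly supported `C¹` function vanishes. -/
theorem integral_fderiv_apply_eq_zero {E : Type*} [NormedAddCommGroup E] [NormedSpace ℝ E]
    [FiniteDimensional ℝ E] [MeasurableSpace E] [BorelSpace E] (μ : Measure E)
    [μ.IsAddHaarMeasure] {F : E → ℝ} (hF : ContDiff ℝ 1 F) (hc : HasCompactSupport F) (v : E) :
    Integrable (fun x => fderiv ℝ F x v) μ ∧ ∫ x, fderiv ℝ F x v ∂μ = 0 := by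
  have hint : Integrable (fun x => fderiv ℝ F x v) μ :=
    ((hF.continuous_fderiv one_ne_zero).clm_apply continuous_const).integrable_of_hasCompactSupport
      (hc.fderiv_apply (𝕜 := ℝ) v)
  refine ⟨hint, ?_⟩
  have h := integral_mul_fderiv_eq_neg_fderiv_mul_of_integrable (μ := μ) (v := v)
    (f := fun _ : E => (1 : ℝ)) (g := F) (by simp) (by simpa using hint)
    (by simpa using hF.continuous.integrable_of_hasCompactSupport hc)
    (by fun_prop) (fun x _ => hF.differentiable one_ne_zero x)
  simpa using h

/-- Expansion of the squared magnetic derivative after multiplication by a real weight. -/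
theorem norm_sq_weighted_magnetic (P b α : ℝ) (z w : ℂ) :
    ‖(P : ℂ) * w + (P * b : ℝ) * z - Complex.I * α * (P * z)‖ ^ 2
      = P ^ 2 * (‖w - Complex.I * α * z‖ ^ 2 + b ^ 2 * ‖z‖ ^ 2 + 2 * b * inner ℝ z w) := by
  rw [← Complex.normSq_eq_norm_sq, ← Complex.normSq_eq_norm_sq, ← Complex.normSq_eq_norm_sq,
    Complex.inner]
  simp [Complex.normSq_apply]
  ring

/-- The field `x ↦ ‖x‖ ^ (-d) x`, multiplied by `‖g‖²`, in coordinates. -/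
noncomputable def radialField {d : ℕ} (g : EuclideanSpace ℝ (Fin d) → ℂ) (j : Fin d)
    (x : EuclideanSpace ℝ (Fin d)) : ℝ :=
  x j * ‖x‖ ^ (-(d : ℝ)) * ‖g x‖ ^ 2

section

variable {d : ℕ} {g : EuclideanSpace ℝ (Fin d) → ℂ}

theorem radialField_contDiff (hg : ContDiff ℝ 1 g)
    (h0 : (0 : EuclideanSpace ℝ (Fin d)) ∉ tsupport g) (j : Fin d) : ContDiff ℝ 1 (radialField g j) := by
  rw [contDiff_iff_contDiffAt]
  intro x
  by_cases hx : x ∈ tsupport g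
  · have hx0 : x ≠ 0 := fun h => h0 (h ▸ hx)
    have h1 : ContDiffAt ℝ 1 (fun y : EuclideanSpace ℝ (Fin d) => y j) x := by fun_prop
    have h2 : ContDiffAt ℝ 1 (fun y : EuclideanSpace ℝ (Fin d) => ‖y‖ ^ (-(d : ℝ))) x :=
      (contDiffAt_norm ℝ hx0).rpow_const_of_ne (norm_ne_zero_iff.mpr hx0)
    exact (h1.mul h2).mul (hg.contDiffAt.norm_sq ℝ)
  · refine contDiffAt_const (c := (0 : ℝ)) |>.congr_of_eventuallyEq ?_
    filter_upwards [notMem_tsupport_iff_eventuallyEq.mp hx] with y hy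
    simp [radialField, hy]

theorem radialField_hasCompactSupport (hc : HasCompactSupport g) (j : Fin d) :
    HasCompactSupport (radialField g j) :=
  hc.mono fun x hx hgx => hx (by simp [radialField, hgx])

theorem fderiv_radialField_single (hg : Differentiable ℝ g) (j : Fin d)
    {x : EuclideanSpace ℝ (Fin d)} (hx : x ≠ 0) :
    fderiv ℝ (radialField g j) x (EuclideanSpace.single j 1)
      = (‖x‖ ^ (-(d : ℝ)) - d * ‖x‖ ^ (-(d : ℝ) - 2) * x j ^ 2) * ‖g x‖ ^ 2
        + 2 * ‖x‖ ^ (-(d : ℝ)) * x j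
          * inner ℝ (g x) (fderiv ℝ g x (EuclideanSpace.single j 1)) := by
  have h1 : HasFDerivAt (fun y : EuclideanSpace ℝ (Fin d) => y j)
      (EuclideanSpace.proj (𝕜 := ℝ) j) x := (EuclideanSpace.proj (𝕜 := ℝ) j).hasFDerivAt
  have h := (h1.mul (hasFDerivAt_norm_rpow_of_ne_zero hx (-(d : ℝ)))).mul
    (hg x).hasFDerivAt.norm_sq
  have h' : HasFDerivAt (radialField g j) _ x := h
  rw [h'.fderiv]
  simp [EuclideanSpace.inner_single_right]
  ring

theorem fderiv_weight_mul_single (hg : Differentiable ℝ g) (p : ℝ) (j : Fin d)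
    {x : EuclideanSpace ℝ (Fin d)} (hx : x ≠ 0) :
    fderiv ℝ (fun y => ((‖y‖ ^ p : ℝ) : ℂ) * g y) x (EuclideanSpace.single j 1)
      = ((‖x‖ ^ p : ℝ) : ℂ) * fderiv ℝ g x (EuclideanSpace.single j 1)
        + ((‖x‖ ^ p * (p * x j / ‖x‖ ^ 2) : ℝ) : ℂ) * g x := by
  have h := (hasFDerivAt_norm_rpow_of_ne_zero hx p).smul (hg x).hasFDerivAt
  have h' : HasFDerivAt (fun y => ((‖y‖ ^ p : ℝ) : ℂ) * g y) _ x := h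
  rw [h'.fderiv]
  have hr : ‖x‖ ^ (p - 2) = ‖x‖ ^ p / ‖x‖ ^ 2 := by
    rw [rpow_sub (norm_pos_iff.mpr hx), rpow_ofNat]
  simp [EuclideanSpace.inner_single_right, hr]
  left
  ring

/-- The pointwise ground state identity. -/
theorem magnetic_hardy_pointwise (hg : Differentiable ℝ g)
    (α : Fin d → ℝ) {x : EuclideanSpace ℝ (Fin d)} (hx : x ≠ 0) :
    ∑ j, ‖fderiv ℝ (fun y => ((‖y‖ ^ (-(((d : ℝ) - 2) / 2)) : ℝ) : ℂ) * g y) x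
            (EuclideanSpace.single j (1 : ℝ))
          - Complex.I * (α j : ℝ) * (((‖x‖ ^ (-(((d : ℝ) - 2) / 2)) : ℝ) : ℂ) * g x)‖ ^ 2
      = (∑ j, ‖fderiv ℝ g x (EuclideanSpace.single j (1 : ℝ))
              - Complex.I * (α j : ℝ) * g x‖ ^ 2) * ‖x‖ ^ (-((d : ℝ) - 2))
        + (((d : ℝ) - 2) / 2) ^ 2
          * (‖((‖x‖ ^ (-(((d : ℝ) - 2) / 2)) : ℝ) : ℂ) * g x‖ ^ 2 / ‖x‖ ^ 2)
        - (((d : ℝ) - 2) / 2)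
          * ∑ j, fderiv ℝ (radialField g j) x (EuclideanSpace.single j (1 : ℝ)) := by
  have hpos : 0 < ‖x‖ := norm_pos_iff.mpr hx
  simp only [fderiv_weight_mul_single hg _ _ hx, norm_sq_weighted_magnetic,
    fderiv_radialField_single hg _ hx]
  set P : ℝ := ‖x‖ ^ (-(((d : ℝ) - 2) / 2)) with hP
  have hP2 : ‖x‖ ^ (-((d : ℝ) - 2)) = P ^ 2 := by
    rw [hP, ← rpow_natCast, ← rpow_mul hpos.le]
    congr 1
    push_cast
    ring
  have hd0 : ‖x‖ ^ (-(d : ℝ)) = P ^ 2 / ‖x‖ ^ 2 := by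
    rw [← hP2, ← rpow_ofNat ‖x‖ 2, ← rpow_sub hpos]
    congr 1
    ring
  have hd2 : ‖x‖ ^ (-(d : ℝ) - 2) = P ^ 2 / ‖x‖ ^ 2 / ‖x‖ ^ 2 := by
    rw [rpow_sub hpos, hd0, rpow_ofNat]
  have hsum : ∑ j, x j ^ 2 = ‖x‖ ^ 2 := (EuclideanSpace.real_norm_sq_eq x).symm
  have hnorm : ‖(P : ℂ) * g x‖ ^ 2 = P ^ 2 * ‖g x‖ ^ 2 := by
    rw [norm_mul, mul_pow, Complex.norm_real, norm_eq_abs, sq_abs]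
  rw [hP2, hd0, hd2, hnorm]
  set I : Fin d → ℝ := fun j => inner ℝ (g x) (fderiv ℝ g x (EuclideanSpace.single j 1))
  have hL : ∀ j, P ^ 2 * (‖fderiv ℝ g x (EuclideanSpace.single j 1)
        - Complex.I * (α j : ℝ) * g x‖ ^ 2
        + (-(((d : ℝ) - 2) / 2) * x j / ‖x‖ ^ 2) ^ 2 * ‖g x‖ ^ 2
        + 2 * (-(((d : ℝ) - 2) / 2) * x j / ‖x‖ ^ 2) * I j)
      = P ^ 2 * ‖fderiv ℝ g x (EuclideanSpace.single j 1) - Complex.I * (α j : ℝ) * g x‖ ^ 2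
        + P ^ 2 * ((((d : ℝ) - 2) / 2) ^ 2 / ‖x‖ ^ 2 / ‖x‖ ^ 2 * ‖g x‖ ^ 2) * x j ^ 2
        - P ^ 2 * ((d : ℝ) - 2) / ‖x‖ ^ 2 * (x j * I j) := fun j => by ring
  have hR : ∀ j, (P ^ 2 / ‖x‖ ^ 2 - d * (P ^ 2 / ‖x‖ ^ 2 / ‖x‖ ^ 2) * x j ^ 2) * ‖g x‖ ^ 2
        + 2 * (P ^ 2 / ‖x‖ ^ 2) * x j * I j
      = P ^ 2 / ‖x‖ ^ 2 * ‖g x‖ ^ 2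
        - d * (P ^ 2 / ‖x‖ ^ 2 / ‖x‖ ^ 2) * ‖g x‖ ^ 2 * x j ^ 2
        + 2 * (P ^ 2 / ‖x‖ ^ 2) * (x j * I j) := fun j => by ring
  rw [Finset.sum_congr rfl fun j _ => hL j, Finset.sum_congr rfl fun j _ => hR j]
  simp only [Finset.sum_add_distrib, Finset.sum_sub_distrib, ← Finset.mul_sum, hsum,
    Finset.sum_const, Finset.card_univ, Fintype.card_fin, nsmul_eq_mul]
  generalize ∑ j, ‖fderiv ℝ g x (EuclideanSpace.single j 1) - Complex.I * (α j : ℝ) * g x‖ ^ 2 = S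
  field_simp
  ring

end

theorem stmt9 (d : ℕ) (hd : 2 ≤ d)
    (A : EuclideanSpace ℝ (Fin d) → EuclideanSpace ℝ (Fin d)) (hA : ContDiff ℝ (⊤ : ℕ∞) A)
    (g : EuclideanSpace ℝ (Fin d) → ℂ) (hg : ContDiff ℝ (⊤ : ℕ∞) g)
    (hsupp : HasCompactSupport g) (hvan : ∀ᶠ x in nhds (0 : EuclideanSpace ℝ (Fin d)), g x = 0) :
    (∫ x, ∑ j, ‖fderiv ℝ (fun y => (‖y‖ ^ (-(((d:ℝ) - 2)/2)) : ℝ) * g y) x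
            (EuclideanSpace.single j (1:ℝ))
          - Complex.I * (A x j : ℝ) * ((‖x‖ ^ (-(((d:ℝ) - 2)/2)) : ℝ) * g x)‖ ^ 2)
      - ((d - 2 : ℝ)/2)^2 *
          (∫ x, ‖(‖x‖ ^ (-(((d:ℝ) - 2)/2)) : ℝ) * g x‖^2 / ‖x‖^2)
    = ∫ x, (∑ j, ‖fderiv ℝ g x (EuclideanSpace.single j (1:ℝ))
              - Complex.I * (A x j : ℝ) * g x‖ ^ 2) * ‖x‖ ^ (-((d:ℝ) - 2)) := by
  have hg1 : ContDiff ℝ 1 g := hg.of_le (by exact_mod_cast le_top)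
  have h0 : (0 : EuclideanSpace ℝ (Fin d)) ∉ tsupport g :=
    notMem_tsupport_iff_eventuallyEq.mpr hvan
  have hne : ∀ x ∈ tsupport g, x ≠ 0 := fun x hx h => h0 (h ▸ hx)
  have hpow : ∀ p : ℝ, ContinuousOn (fun x : EuclideanSpace ℝ (Fin d) => ‖x‖ ^ p) (tsupport g) :=
    fun p => continuous_norm.continuousOn.rpow_const
      fun x hx => Or.inl (norm_ne_zero_iff.mpr (hne x hx))
  have hoff : ∀ x ∉ tsupport g, g x = 0 := fun x hx => image_eq_zero_of_notMem_tsupport hx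
  have hoff' : ∀ x ∉ tsupport g, fderiv ℝ g x = 0 := fun x hx => by
    rw [(notMem_tsupport_iff_eventuallyEq.mp hx).fderiv_eq]
    exact fderiv_const_apply 0
  have hA0 : Continuous A := hA.continuous
  have hdg : Continuous (fderiv ℝ g) := hg1.continuous_fderiv one_ne_zero
  have hG : Integrable (fun x => (∑ j, ‖fderiv ℝ g x (EuclideanSpace.single j (1:ℝ))
      - Complex.I * (A x j : ℝ) * g x‖ ^ 2) * ‖x‖ ^ (-((d:ℝ) - 2))) := by
    refine integrable_of_continuousOn_of_eq_zero_off hsupp.isCompact ?_ ?_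
    · refine ContinuousOn.mul (Continuous.continuousOn ?_) (hpow _)
      have := hg1.continuous
      fun_prop
    · intro x hx
      simp [hoff x hx, hoff' x hx]
  have hH : Integrable (fun x => ‖((‖x‖ ^ (-(((d:ℝ) - 2)/2)) : ℝ) : ℂ) * g x‖^2 / ‖x‖^2) := by
    refine integrable_of_continuousOn_of_eq_zero_off hsupp.isCompact ?_ ?_
    · refine ContinuousOn.div ?_ (by fun_prop)
        fun x hx => pow_ne_zero 2 (norm_ne_zero_iff.mpr (hne x hx))
      exact ((Complex.continuous_ofReal.comp_continuousOn (hpow _)).mul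
        hg1.continuous.continuousOn).norm.pow 2
    · intro x hx
      simp [hoff x hx]
  have hB := fun j => integral_fderiv_apply_eq_zero (volume : Measure (EuclideanSpace ℝ (Fin d)))
    (radialField_contDiff hg1 h0 j) (radialField_hasCompactSupport hsupp j)
    (EuclideanSpace.single j (1:ℝ))
  have hBsum : Integrable (fun x => ∑ j,
      fderiv ℝ (radialField g j) x (EuclideanSpace.single j (1:ℝ))) :=
    integrable_finsetSum _ fun j _ => (hB j).1
  have hB0 : ∫ x, ∑ j, fderiv ℝ (radialField g j) x (EuclideanSpace.single j (1:ℝ)) = 0 := by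
    rw [integral_finsetSum _ fun j _ => (hB j).1]
    exact Finset.sum_eq_zero fun j _ => (hB j).2
  have : Nonempty (Fin d) := ⟨⟨0, by omega⟩⟩
  have hae : ∀ᵐ x : EuclideanSpace ℝ (Fin d), x ≠ 0 := by
    simp [ae_iff]
  rw [integral_congr_ae (hae.mono fun x hx =>
    magnetic_hardy_pointwise (hg1.differentiable one_ne_zero) (fun j => A x j) hx),
    integral_sub (hG.fun_add (hH.const_mul _)) (hBsum.const_mul _),
    integral_add hG (hH.const_mul _), integral_const_mul, integral_const_mul, hB0]
  ring
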